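/- Let v ∈ M_d and let L^f(v) = {w ∈ M_d : w ≤_lex v} be the final lexsegment determined by v. Then L^f(v) satisfies the σ-exchange property, where <_σ is the decreasing revlexicographic order on S, with respect to every monomial order < on R = K[{T_w}_{w ∈ L^f(v)}]. -/

import Mathlib

/-!
All products of `N` elements of `M_d` have degree `N * d`. If `u_1⋯u_N <_σ v_1⋯v_N`, then at the
last index `q` where the exponents differ the second product has the larger one, so equality of
degrees forces an index `j < q` at which the first product has the larger one
(`exists_lt_of_revLexGT`). Some factor `u_δ` is then divisible by `x_j`, and `x_q u_δ / x_j` is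
lexicographically smaller than `u_δ` (`lexLT_exchange`), hence stays in the final lexsegment.
-/


/-- Monomials of `K[x_1,…,x_n]`, encoded by their exponent vectors (`x_1` ↔ index `0`). -/
abbrev Mon (n : ℕ) := Fin n →₀ ℕ

/-- Total degree of a monomial. -/
def mdeg {n : ℕ} (m : Mon n) : ℕ := ∑ i, m i

/-- `m <_lex m'` (so `m' >_lex m`) with `x_1 > x_2 > ⋯ > x_n`: at the first index where the
exponent vectors differ, `m'` has the larger exponent. -/
def LexLT {n : ℕ} (m m' : Mon n) : Prop :=
  ∃ i : Fin n, (∀ j, j < i → m j = m' j) ∧ m i < m' i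

/-- `m ≤_lex m'`. -/
def LexLE {n : ℕ} (m m' : Mon n) : Prop := m = m' ∨ LexLT m m'

/-- `m >_revlex m'` for monomials of equal degree: at the last index where the exponent
vectors differ, `m` has the smaller exponent. -/
def RevLexGT {n : ℕ} (m m' : Mon n) : Prop :=
  ∃ s : Fin n, (∀ t, s < t → m t = m' t) ∧ m s < m' s

/-- The decreasing revlexicographic order on monomials: `m <_σ m'` iff `deg m < deg m'`, or
the degrees agree and `m >_revlex m'`. -/
def DecRevLexLT {n : ℕ} (m m' : Mon n) : Prop :=
  mdeg m < mdeg m' ∨ (mdeg m = mdeg m' ∧ RevLexGT m m')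

/-- The lexsegment set `L(u,v) = {w ∈ M_d : u ≥_lex w ≥_lex v}`. -/
def LSeg {n : ℕ} (u v : Mon n) (d : ℕ) : Set (Mon n) :=
  {w | mdeg w = d ∧ LexLE w u ∧ LexLE v w}

/-- `A` is a lexsegment set inside `M_e`. -/
def IsLexSegmentSet {n : ℕ} (A : Set (Mon n)) (e : ℕ) : Prop :=
  ∃ u v : Mon n, mdeg u = e ∧ mdeg v = e ∧ LexLE v u ∧ A = LSeg u v e

/-- `(L(u,v))` is a completely lexsegment ideal: for every `k ≥ 0` the `k`-th shadow
`{m·w : m ∈ M_k, w ∈ L(u,v)}` is a lexsegment set in `M_{d+k}`. -/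
def IsCompletelyLex {n : ℕ} (u v : Mon n) (d : ℕ) : Prop :=
  ∀ k : ℕ,
    IsLexSegmentSet {w | ∃ m w₀, mdeg m = k ∧ w₀ ∈ LSeg u v d ∧ w = m + w₀} (d + k)

/-- The set of products of `N` monomials from `B`; for `B` a set of monomials of a fixed
degree `d` this is the minimal monomial generating set of `I^N`, `I = (B)`. -/
def prodSet {n : ℕ} (B : Set (Mon n)) (N : ℕ) : Set (Mon n) :=
  {m | ∃ f : Fin N → Mon n, (∀ i, f i ∈ B) ∧ m = ∑ i, f i}

/-- The equigenerated monomial ideal with (minimal) monomial generating set `G` has linear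
quotients with respect to the order given by `prec` (`prec a b` = "`a` is listed before
`b`"): for generators `u_j` before `u_i` there are a generator `u_k` before `u_i` and a
variable `x_q` with `u_k / gcd(u_k,u_i) = x_q` and `x_q ∣ u_j / gcd(u_j,u_i)`. -/
def LinQuotOrder {n : ℕ} (G : Set (Mon n)) (prec : Mon n → Mon n → Prop) : Prop :=
  ∀ uj ∈ G, ∀ ui ∈ G, prec uj ui →
    ∃ uk ∈ G, prec uk ui ∧ ∃ q : Fin n,
      (∀ p : Fin n, p ≠ q → uk p ≤ ui p) ∧ uk q = ui q + 1 ∧ ui q < uj q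

/-- The equigenerated monomial ideal with minimal monomial generating set `G` has linear
quotients (with respect to some linear order of the generators). -/
def HasLinQuot {n : ℕ} (G : Set (Mon n)) : Prop :=
  ∃ prec : Mon n → Mon n → Prop,
    (∀ a ∈ G, ¬ prec a a) ∧
    (∀ a ∈ G, ∀ b ∈ G, ∀ c ∈ G, prec a b → prec b c → prec a c) ∧
    (∀ a ∈ G, ∀ b ∈ G, a ≠ b → prec a b ∨ prec b a) ∧
    LinQuotOrder G prec
/-- A monomial order on a polynomial ring with variables indexed by `α`, given as a strict
total order on exponent vectors which is compatible with multiplication of monomials and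
for which `1` is the smallest monomial. -/
structure MonOrd (α : Type*) where
  lt : (α →₀ ℕ) → (α →₀ ℕ) → Prop
  irrefl : ∀ a, ¬ lt a a
  trans : ∀ a b c, lt a b → lt b c → lt a c
  total : ∀ a b, a ≠ b → lt a b ∨ lt b a
  add_right : ∀ a b c, lt a b → lt (a + c) (b + c)
  zero_lt : ∀ a, a ≠ 0 → lt 0 a

/-- The map `π : R = K[{T_u}_{u ∈ B}] → S`, `T_u ↦ u`. -/
noncomputable def piB {n : ℕ} (K : Type*) [Field K] (B : Set (Mon n)) :
    MvPolynomial ↥B K →ₐ[K] MvPolynomial (Fin n) K :=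
  MvPolynomial.aeval (fun u : ↥B => MvPolynomial.monomial (u : Mon n) (1 : K))

/-- The toric ideal `J = ker π` of `K[B]`. -/
noncomputable def toricJ {n : ℕ} (K : Type*) [Field K] (B : Set (Mon n)) :
    Ideal (MvPolynomial ↥B K) :=
  RingHom.ker (piB K B).toRingHom

/-- `m` is the leading monomial of `f ≠ 0` with respect to the order `lt` on exponent
vectors. -/
def IsLeadMon {α K : Type*} [CommSemiring K] (lt : (α →₀ ℕ) → (α →₀ ℕ) → Prop)
    (f : MvPolynomial α K) (m : α →₀ ℕ) : Prop :=
  m ∈ f.support ∧ ∀ m' ∈ f.support, m' ≠ m → lt m' m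

/-- `m` is a standard monomial of the ideal `J` with respect to the order `lt`: it is not
the leading monomial of any nonzero element of `J`. -/
def IsStdMon {α K : Type*} [CommSemiring K] (lt : (α →₀ ℕ) → (α →₀ ℕ) → Prop)
    (J : Ideal (MvPolynomial α K)) (m : α →₀ ℕ) : Prop :=
  ∀ f ∈ J, f ≠ 0 → ¬ IsLeadMon lt f m

/-- The image in `S` of a monomial `T_{u_1} ⋯ T_{u_N}` of `R`, i.e. the product
`u_1 ⋯ u_N`. -/
noncomputable def expandB {n : ℕ} {B : Set (Mon n)} (e : ↥B →₀ ℕ) : Mon n :=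
  e.sum fun u k => k • (u : Mon n)

/-- The number `N` of factors of a monomial `T_{u_1} ⋯ T_{u_N}` of `R`. -/
def edeg {n : ℕ} {B : Set (Mon n)} (e : ↥B →₀ ℕ) : ℕ := e.sum fun _ k => k

/-- `B` satisfies the σ-exchange property (with respect to the order `ltσ` on the monomials
of `S` and the order `ltR` on the monomials of `R = K[{T_u}_{u∈B}]`): whenever
`T_{u_1}⋯T_{u_N}` and `T_{v_1}⋯T_{v_N}` are standard monomials of `J` with
`u_1⋯u_N <_σ v_1⋯v_N`, there are a factor `u_δ`, a `q ∈ supp(v_1⋯v_N)` and a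
`j ∈ supp(u_δ)` with `ν_q(u_1⋯u_N) < ν_q(v_1⋯v_N)`, `x_j <_σ x_q` and
`x_q u_δ / x_j ∈ B`. -/
def SigmaExchange {n : ℕ} (K : Type*) [Field K] (B : Set (Mon n))
    (ltσ : Mon n → Mon n → Prop)
    (ltR : (↥B →₀ ℕ) → (↥B →₀ ℕ) → Prop) : Prop :=
  ∀ e e' : ↥B →₀ ℕ, edeg e = edeg e' →
    IsStdMon ltR (toricJ K B) e → IsStdMon ltR (toricJ K B) e' →
    ltσ (expandB e) (expandB e') →
    ∃ uδ : ↥B, 0 < e uδ ∧ ∃ q j : Fin n,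
      expandB e q < expandB e' q ∧
      0 < (uδ : Mon n) j ∧
      ltσ (Finsupp.single j 1) (Finsupp.single q 1) ∧
      ((uδ : Mon n) + Finsupp.single q 1 - Finsupp.single j 1) ∈ B

/-- The map `φ : 𝒯 = K[x_1,…,x_n,{T_u}_{u∈B}] → S[t]`, `x_i ↦ x_i`, `T_u ↦ u·t`; its image
is the Rees algebra of `I = (B)`. -/
noncomputable def reesPhi {n : ℕ} (K : Type*) [Field K] (B : Set (Mon n)) :
    MvPolynomial (Fin n ⊕ ↥B) K →ₐ[K] Polynomial (MvPolynomial (Fin n) K) :=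
  MvPolynomial.aeval (Sum.elim
    (fun i : Fin n => Polynomial.C (MvPolynomial.X i))
    (fun u : ↥B => Polynomial.C (MvPolynomial.monomial (u : Mon n) (1 : K)) * Polynomial.X))

/-- The toric ideal `P = ker φ` of the Rees algebra of `I = (B)`. -/
noncomputable def reesP {n : ℕ} (K : Type*) [Field K] (B : Set (Mon n)) :
    Ideal (MvPolynomial (Fin n ⊕ ↥B) K) :=
  RingHom.ker (reesPhi K B).toRingHom

/-- `f ∈ 𝒯` only involves the variables `T_u`, i.e. `f ∈ K[{T_u}_{u∈B}]`. -/
def OnlyT {n : ℕ} {K : Type*} [Field K] {B : Set (Mon n)}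
    (f : MvPolynomial (Fin n ⊕ ↥B) K) : Prop :=
  ∀ m ∈ f.support, ∀ i : Fin n, m (Sum.inl i) = 0

/-- `f ∈ 𝒯` is homogeneous of degree `1` in the variables `T_u`. -/
def TDegOne {n : ℕ} {K : Type*} [Field K] {B : Set (Mon n)}
    (f : MvPolynomial (Fin n ⊕ ↥B) K) : Prop :=
  ∀ m ∈ f.support, (∑ s ∈ m.support, if s.isRight then m s else 0) = 1

/-- The monomial ideal `I = (B)` is of fiber type: the toric ideal `P` of its Rees algebra
is generated by `P ∩ K[{T_u}_{u∈B}]` together with the elements of `P` homogeneous of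
degree `1` in the variables `T_u`. -/
def IsFiberType {n : ℕ} (K : Type*) [Field K] (B : Set (Mon n)) : Prop :=
  reesP K B =
    Ideal.span ({f | f ∈ reesP K B ∧ OnlyT f} ∪ {f | f ∈ reesP K B ∧ TDegOne f})

/-- The `S`-part of a monomial of `𝒯`. -/
noncomputable def sPart {n : ℕ} {B : Set (Mon n)} (m : (Fin n ⊕ ↥B) →₀ ℕ) : Mon n :=
  (Finsupp.sumFinsuppEquivProdFinsupp m).1

/-- The `T`-part of a monomial of `𝒯`. -/
noncomputable def tPart {n : ℕ} {B : Set (Mon n)} (m : (Fin n ⊕ ↥B) →₀ ℕ) : ↥B →₀ ℕ :=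
  (Finsupp.sumFinsuppEquivProdFinsupp m).2

/-- The product order `<_σ^#` on the monomials of `𝒯 = K[x_1,…,x_n,{T_u}_{u∈B}]`. -/
def ProdLT {n : ℕ} {B : Set (Mon n)} (ltσ : Mon n → Mon n → Prop)
    (ltR : (↥B →₀ ℕ) → (↥B →₀ ℕ) → Prop)
    (m m' : (Fin n ⊕ ↥B) →₀ ℕ) : Prop :=
  ltσ (sPart m) (sPart m') ∨ (sPart m = sPart m' ∧ ltR (tPart m) (tPart m'))

/-- `G` is a Gröbner basis of the ideal `P` with respect to the order `lt`: the leading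
monomial of every nonzero `f ∈ P` is divisible by the leading monomial of some element
of `G`. -/
def IsGB {α K : Type*} [CommSemiring K] (lt : (α →₀ ℕ) → (α →₀ ℕ) → Prop)
    (P : Ideal (MvPolynomial α K)) (G : Set (MvPolynomial α K)) : Prop :=
  ∀ f ∈ P, f ≠ 0 → ∃ g ∈ G, g ≠ 0 ∧
    ∃ mg mf, IsLeadMon lt g mg ∧ IsLeadMon lt f mf ∧ mg ≤ mf

theorem LexLT.trans_lexLE {n : ℕ} {a b c : Mon n} (hab : LexLT a b) (hbc : LexLE b c) :
    LexLE a c := by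
  rcases hbc with rfl | ⟨k, hk, hk'⟩
  · exact Or.inr hab
  · obtain ⟨i, hi, hi'⟩ := hab
    right
    rcases lt_trichotomy i k with h | rfl | h
    · exact ⟨i, fun t ht => (hi t ht).trans (hk t (ht.trans h)), hk i h ▸ hi'⟩
    · exact ⟨i, fun t ht => (hi t ht).trans (hk t ht), hi'.trans hk'⟩
    · exact ⟨k, fun t ht => (hi t (ht.trans h)).trans (hk t ht), (hi k h).symm ▸ hk'⟩

theorem mdeg_add {n : ℕ} (a b : Mon n) : mdeg (a + b) = mdeg a + mdeg b := by
  simp [mdeg, Finset.sum_add_distrib]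

theorem mdeg_single {n : ℕ} (i : Fin n) : mdeg (Finsupp.single i 1 : Mon n) = 1 := by
  simp [mdeg, Finsupp.single_apply]

theorem mdeg_expandB {n d : ℕ} {B : Set (Mon n)} (hB : ∀ w ∈ B, mdeg w = d) (e : ↥B →₀ ℕ) :
    mdeg (expandB e) = edeg e * d := by
  have hcoord : ∀ i, expandB e i = ∑ u ∈ e.support, e u * (u : Mon n) i := by
    intro i
    simp [expandB, Finsupp.sum]
  simp only [mdeg, hcoord, edeg, Finsupp.sum, Finset.sum_mul]
  rw [Finset.sum_comm]
  refine Finset.sum_congr rfl fun u _ => ?_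
  rw [← Finset.mul_sum]
  exact congrArg (e u * ·) (hB u u.2)

/-- In equal degree, an excess of `b` over `a` at the last differing index `q` is compensated by
an excess of `a` over `b` at an earlier index. -/
theorem exists_lt_of_revLexGT {n : ℕ} {a b : Mon n} (hdeg : mdeg a = mdeg b)
    (h : RevLexGT a b) : ∃ q j : Fin n, j < q ∧ a q < b q ∧ b j < a j := by
  obtain ⟨q, hq, hlt⟩ := h
  have hj : ∃ j, b j < a j := by
    by_contra! hle
    exact (Finset.sum_lt_sum (fun i _ => hle i) ⟨q, Finset.mem_univ q, hlt⟩).ne hdeg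
  obtain ⟨j, hj⟩ := hj
  refine ⟨q, j, ?_, hlt, hj⟩
  by_contra! hqj
  rcases hqj.eq_or_lt with rfl | hqj
  · exact hlt.asymm hj
  · exact hj.ne' (hq j hqj)

theorem mdeg_exchange {n : ℕ} {u : Mon n} {j : Fin n} (q : Fin n) (hj : 0 < u j) :
    mdeg (u + Finsupp.single q 1 - Finsupp.single j 1) = mdeg u := by
  have hle : (Finsupp.single j 1 : Mon n) ≤ u + Finsupp.single q 1 := by
    rw [Finsupp.single_le_iff]
    simp only [Finsupp.add_apply]
    omega
  have h := congrArg mdeg (tsub_add_cancel_of_le hle)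
  simp only [mdeg_add, mdeg_single] at h
  omega

theorem lexLT_exchange {n : ℕ} {u : Mon n} {j q : Fin n} (hjq : j < q) (hj : 0 < u j) :
    LexLT (u + Finsupp.single q 1 - Finsupp.single j 1) u := by
  refine ⟨j, fun i hi => ?_, ?_⟩
  · simp [hi.ne', (hi.trans hjq).ne']
  · simp only [Finsupp.tsub_apply, Finsupp.add_apply, Finsupp.single_apply, hjq.ne', if_true,
      if_false]
    omega

/-- every final lexsegment `L^f(v) = {w ∈ M_d : w ≤_lex v}` satisfies the
σ-exchange property, where `<_σ` is the decreasing revlexicographic order on `S`, with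
respect to every monomial order on `R = K[{T_w}_{w ∈ L^f(v)}]`. -/
theorem stmt11 {n : ℕ} (hn : 0 < n) (K : Type*) [Field K]
    (d : ℕ) (v : Mon n) (hvd : mdeg v = d) :
    ∀ o : MonOrd ↥{w : Mon n | mdeg w = d ∧ LexLE w v},
      SigmaExchange K {w : Mon n | mdeg w = d ∧ LexLE w v} DecRevLexLT o.lt := by
  intro o e e' hee' _ _ hlt
  have hdeg : mdeg (expandB e) = mdeg (expandB e') := by
    rw [mdeg_expandB (fun w hw => hw.1) e, mdeg_expandB (fun w hw => hw.1) e', hee']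
  have hrev : RevLexGT (expandB e) (expandB e') := by
    rcases hlt with h | h
    · exact absurd hdeg h.ne
    · exact h.2
  obtain ⟨q, j, hjq, hq, hj⟩ := exists_lt_of_revLexGT hdeg hrev
  have hu : ∃ u, 0 < e u ∧ 0 < (u : Mon n) j := by
    by_contra! hno
    have hzero : expandB e j = 0 := by
      simp only [expandB, Finsupp.sum, Finsupp.finsetSum_apply, Finsupp.smul_apply, smul_eq_mul]
      refine Finset.sum_eq_zero fun u hu => ?_
      rw [Nat.le_zero.mp (hno u (Nat.pos_of_ne_zero (Finsupp.mem_support_iff.mp hu))), mul_zero]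
    omega
  obtain ⟨u, hue, huj⟩ := hu
  refine ⟨u, hue, q, j, hq, huj, Or.inr ⟨?_, q, fun t ht => ?_, ?_⟩, ?_, ?_⟩
  · rw [mdeg_single, mdeg_single]
  · simp [ht.ne, (hjq.trans ht).ne]
  · simp [hjq.ne]
  · exact (mdeg_exchange q huj).trans u.2.1
  · exact (lexLT_exchange hjq huj).trans_lexLE u.2.2
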